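/- Let α ∈ (ρ_c^0, 1) with α ≠ 1 − ρ_c^0 and β ∈ (1 − ρ_c^1, 1) with β ≠ ρ_c^1 (the transitional/canard parameter regions), and let x ∈ (0,1). Then for every δ > 0 there exists ε_0 > 0 such that for every ε ∈ (0, ε_0) and every twice continuously differentiable ρ : [0,1] → ℝ solving the stationary boundary value problem one has |ρ(x) − ρ_Sc(x)| < δ, where ρ_Sc(x) = ρ_c^+(x) for x ≤ ξ* and ρ_Sc(x) = ρ_c^−(x) for x ≥ ξ*; i.e., in the interior the solutions converge pointwise to the canard profile, which makes a transition from high density (ρ > 1/2) before the bottleneck to low density (ρ < 1/2) after it. -/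

import Mathlib

open Set

/-- The total flux `j(x) = -ε ρ'(x) + ρ(x)(1-ρ(x))` of a density profile `ρ` on `[0,1]`. -/
noncomputable def flux (ε : ℝ) (ρ : ℝ → ℝ) (x : ℝ) : ℝ :=
  -ε * derivWithin ρ (Icc (0:ℝ) 1) x + ρ x * (1 - ρ x)

/-- `ρ` is a (twice continuously differentiable) solution of the stationary boundary value
problem: `(k j)' = 0` on `[0,1]`, `j(0) = α(1-ρ(0))`, `j(1) = β ρ(1)`. -/
def IsStatSol (k : ℝ → ℝ) (ε α β : ℝ) (ρ : ℝ → ℝ) : Prop :=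
  ContDiffOn ℝ 2 ρ (Icc (0:ℝ) 1) ∧
  (∀ x ∈ Icc (0:ℝ) 1, derivWithin (fun y => k y * flux ε ρ y) (Icc (0:ℝ) 1) x = 0) ∧
  flux ε ρ 0 = α * (1 - ρ 0) ∧
  flux ε ρ 1 = β * ρ 1

/-- Upper canard branch `ρ_c^+(ξ) = (1/2)(1 + √(1 - k(ξ*)/k(ξ)))`. -/
noncomputable def rhoCPlus (k : ℝ → ℝ) (ξs ξ : ℝ) : ℝ :=
  1/2 * (1 + Real.sqrt (1 - k ξs / k ξ))

/-- Lower canard branch `ρ_c^-(ξ) = (1/2)(1 - √(1 - k(ξ*)/k(ξ)))`. -/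
noncomputable def rhoCMinus (k : ℝ → ℝ) (ξs ξ : ℝ) : ℝ :=
  1/2 * (1 - Real.sqrt (1 - k ξs / k ξ))

/-- The singular canard `ρ_Sc`: upper branch before the bottleneck, lower branch after. -/
noncomputable def rhoSc (k : ℝ → ℝ) (ξs ξ : ℝ) : ℝ :=
  if ξ ≤ ξs then rhoCPlus k ξs ξ else rhoCMinus k ξs ξ

/-- `ρ_c^0 = ρ_c^-(0)`. -/
noncomputable def rhoC0 (k : ℝ → ℝ) (ξs : ℝ) : ℝ := rhoCMinus k ξs 0

/-- `ρ_c^1 = ρ_c^+(1)`. -/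
noncomputable def rhoC1 (k : ℝ → ℝ) (ξs : ℝ) : ℝ := rhoCPlus k ξs 1

/-!
With `u = 2ρ - 1` and `lam = 4 k j`, which is constant along a solution, the problem becomes the
Riccati equation `2ε u' = 1 - lam / k - u²`. As `ε → 0`, `u` moves arbitrarily fast wherever the
right-hand side is bounded away from zero. If `lam` stayed above `k ξ*`, `u` would fall below `-1`
near the bottleneck; if it stayed below, `u` would have to climb through zero between two points
where the boundary layers have already made it nonnegative, respectively nonpositive. Hence
`lam → k ξ*`. The attracting branch `√(1 - k ξ* / k)` is then followed from the left end up to `ξ*`,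
and the symmetry `x ↦ 1 - x`, `u ↦ -u`, `α ↔ β` yields the branch `-√(1 - k ξ* / k)` beyond `ξ*`.
-/

open Filter Topology

section FastDynamics

variable {ι : Type*} {l : Filter ι} {ε : ι → ℝ} {u v : ι → ℝ → ℝ} {a b p q d : ℝ}

lemma le_of_slope_lt_deriv {u u' : ℝ → ℝ} (hab : a < b) (hpq : p ≤ q)
    (hu : ∀ x ∈ Icc a b, HasDerivWithinAt u (u' x) (Icc a b) x) (ha : p ≤ u a)
    (hslope : ∀ x ∈ Icc a b, u x ∈ Icc p q → (q - p) / (b - a) < u' x) : q ≤ u b := by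
  have hba : 0 < b - a := sub_pos.2 hab
  set m := (q - p) / (b - a)
  have hm : 0 ≤ m := div_nonneg (sub_nonneg.2 hpq) hba.le
  have hmq : p + m * (b - a) = q := by rw [div_mul_cancel₀ _ hba.ne']; ring
  have hline (x : ℝ) : HasDerivAt (fun y => p + m * (y - a)) m x := by
    simpa using (((hasDerivAt_id x).sub_const a).const_mul m).const_add p
  have hbarrier : ∀ ⦃x⦄, x ∈ Icc a b → p + m * (x - a) ≤ u x := by
    refine image_le_of_deriv_right_lt_deriv_boundary' (f' := fun _ => m) (B' := u')
      (by fun_prop) (fun x _ => (hline x).hasDerivWithinAt) (by simpa using ha)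
      (fun x hx => (hu x hx).continuousWithinAt)
      (fun x hx => (hu x ⟨hx.1, hx.2.le⟩).mono_of_mem_nhdsWithin
        (mem_of_superset (Icc_mem_nhdsGE hx.2) (Icc_subset_Icc_left hx.1)))
      (fun x hx hcross => hslope x ⟨hx.1, hx.2.le⟩ ?_)
    rw [← hcross, ← hmq]
    exact ⟨le_add_of_nonneg_right (mul_nonneg hm (sub_nonneg.2 hx.1)), by gcongr; exact hx.2.le⟩
  exact hmq ▸ hbarrier (right_mem_Icc.2 hab.le)

lemma eventually_le_of_fast_growth (hε : Tendsto ε l (𝓝[>] 0)) (hab : a < b) (hpq : p ≤ q)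
    (hu : ∀ᶠ i in l, ∀ x ∈ Icc a b, HasDerivWithinAt (u i) (v i x / ε i) (Icc a b) x)
    (ha : ∀ᶠ i in l, p ≤ u i a) (hd : 0 < d)
    (hv : ∀ᶠ i in l, ∀ x ∈ Icc a b, u i x ∈ Icc p q → d ≤ v i x) :
    ∀ᶠ i in l, q ≤ u i b := by
  have hεpos : ∀ᶠ i in l, 0 < ε i := hε.eventually eventually_mem_nhdsWithin
  have hslope : ∀ᶠ i in l, (q - p) / (b - a) * ε i < d := by
    have hlim := (hε.mono_right nhdsWithin_le_nhds).const_mul ((q - p) / (b - a))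
    rw [mul_zero] at hlim
    exact hlim.eventually_lt_const hd
  filter_upwards [hεpos, hslope, hu, ha, hv] with i hεi hsi hui hai hvi
  exact le_of_slope_lt_deriv hab hpq hui hai fun x hx hux =>
    (lt_div_iff₀ hεi).2 (hsi.trans_le (hvi x hx hux))

lemma eventually_ge_of_fast_decay (hε : Tendsto ε l (𝓝[>] 0)) (hab : a < b) (hqp : q ≤ p)
    (hu : ∀ᶠ i in l, ∀ x ∈ Icc a b, HasDerivWithinAt (u i) (v i x / ε i) (Icc a b) x)
    (ha : ∀ᶠ i in l, u i a ≤ p) (hd : 0 < d)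
    (hv : ∀ᶠ i in l, ∀ x ∈ Icc a b, u i x ∈ Icc q p → v i x ≤ -d) :
    ∀ᶠ i in l, u i b ≤ q := by
  have hneg : ∀ᶠ i in l, -q ≤ -u i b := by
    refine eventually_le_of_fast_growth (u := fun i x => -u i x) (v := fun i x => -v i x)
      hε hab (neg_le_neg hqp) ?_ (ha.mono fun i hi => neg_le_neg hi) hd ?_
    · filter_upwards [hu] with i hi x hx
      exact (hi x hx).neg.congr_deriv (neg_div _ _).symm
    · filter_upwards [hv] with i hi x hx hux
      exact le_neg_of_le_neg (hi x hx ⟨neg_le_neg_iff.1 hux.2, neg_le_neg_iff.1 hux.1⟩)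
  exact hneg.mono fun i hi => neg_le_neg_iff.1 hi

end FastDynamics

lemma one_sub_mem_Icc {x : ℝ} (hx : x ∈ Icc (0 : ℝ) 1) : 1 - x ∈ Icc (0 : ℝ) 1 :=
  ⟨sub_nonneg.2 hx.2, sub_le_self _ hx.1⟩

lemma exists_Icc_forall_of_eventually {c x : ℝ} {P : ℝ → Prop} (hcx : c < x)
    (hP : ∀ᶠ y in 𝓝 x, P y) : ∃ a ∈ Ioo c x, ∀ y ∈ Icc a x, P y := by
  obtain ⟨a, hax, ha⟩ := mem_nhdsLE_iff_exists_Icc_subset.1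
    ((hP.and (eventually_gt_nhds hcx)).filter_mono nhdsWithin_le_nhds)
  exact ⟨a, ⟨(ha (left_mem_Icc.2 hax.le)).2, hax⟩, fun y hy => (ha hy).1⟩

lemma rhoC0_reflect (k : ℝ → ℝ) (ξ : ℝ) :
    rhoC0 (fun x => k (1 - x)) (1 - ξ) = 1 - rhoC1 k ξ := by
  simp only [rhoC0, rhoC1, rhoCMinus, rhoCPlus, sub_sub_cancel, sub_zero]
  ring

lemma rhoC1_reflect (k : ℝ → ℝ) (ξ : ℝ) :
    rhoC1 (fun x => k (1 - x)) (1 - ξ) = 1 - rhoC0 k ξ := by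
  simp only [rhoC0, rhoC1, rhoCMinus, rhoCPlus, sub_sub_cancel, sub_self]
  ring

/-- A channel profile on `[0,1]` with a bottleneck at `ξ`: `k` is continuous and positive, and
attains its minimum over `[0,1]` only at the interior point `ξ`. -/
structure IsBottleneck (k : ℝ → ℝ) (ξ : ℝ) : Prop where
  continuousOn : ContinuousOn k (Icc 0 1)
  pos : ∀ x ∈ Icc (0 : ℝ) 1, 0 < k x
  mem_Ioo : ξ ∈ Ioo (0 : ℝ) 1
  lt : ∀ x ∈ Icc (0 : ℝ) 1, x ≠ ξ → k ξ < k x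

namespace IsBottleneck

variable {k : ℝ → ℝ} {ξ : ℝ}

lemma mem_Icc (K : IsBottleneck k ξ) : ξ ∈ Icc (0 : ℝ) 1 := Ioo_subset_Icc_self K.mem_Ioo

lemma min_pos (K : IsBottleneck k ξ) : 0 < k ξ := K.pos ξ K.mem_Icc

lemma le (K : IsBottleneck k ξ) {x : ℝ} (hx : x ∈ Icc (0 : ℝ) 1) : k ξ ≤ k x := by
  rcases eq_or_ne x ξ with rfl | hne
  exacts [le_rfl, (K.lt x hx hne).le]

lemma reflect (K : IsBottleneck k ξ) : IsBottleneck (fun x => k (1 - x)) (1 - ξ) where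
  continuousOn := K.continuousOn.comp (by fun_prop) fun _ => one_sub_mem_Icc
  pos x hx := K.pos _ (one_sub_mem_Icc hx)
  mem_Ioo := ⟨sub_pos.2 K.mem_Ioo.2, sub_lt_self _ K.mem_Ioo.1⟩
  lt x hx hne := by
    rw [sub_sub_cancel]
    exact K.lt _ (one_sub_mem_Icc hx) fun h => hne (by rw [← h, sub_sub_cancel])

lemma one_sub_div_nonneg (K : IsBottleneck k ξ) {x : ℝ} (hx : x ∈ Icc (0 : ℝ) 1) :
    0 ≤ 1 - k ξ / k x :=
  sub_nonneg.2 ((div_le_one (K.pos x hx)).2 (K.le hx))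

lemma one_sub_div_pos (K : IsBottleneck k ξ) {x : ℝ} (hx : x ∈ Icc (0 : ℝ) 1) (hne : x ≠ ξ) :
    0 < 1 - k ξ / k x :=
  sub_pos.2 ((div_lt_one (K.pos x hx)).2 (K.lt x hx hne))

lemma continuousOn_one_sub_div (K : IsBottleneck k ξ) :
    ContinuousOn (fun x => 1 - k ξ / k x) (Icc 0 1) :=
  continuousOn_const.sub (continuousOn_const.div K.continuousOn fun x hx => (K.pos x hx).ne')

lemma continuousAt_one_sub_div (K : IsBottleneck k ξ) {x : ℝ} (hx : x ∈ Ioo (0 : ℝ) 1) :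
    ContinuousAt (fun x => 1 - k ξ / k x) x :=
  K.continuousOn_one_sub_div.continuousAt (Icc_mem_nhds hx.1 hx.2)

lemma rhoC0_pos (K : IsBottleneck k ξ) : 0 < rhoC0 k ξ := by
  have hratio : 0 < k ξ / k 0 := div_pos K.min_pos (K.pos 0 (by simp))
  have hsqrt : √(1 - k ξ / k 0) < 1 := (Real.sqrt_lt' one_pos).2 (by linarith)
  unfold rhoC0 rhoCMinus
  linarith

lemma one_sub_rhoC1_pos (K : IsBottleneck k ξ) : 0 < 1 - rhoC1 k ξ :=
  rhoC0_reflect k ξ ▸ K.reflect.rhoC0_pos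

lemma neg_sqrt_lt_boundary_value (K : IsBottleneck k ξ) {α : ℝ} (hα : rhoC0 k ξ < α) :
    -√(1 - k ξ / k 0) < 1 - k ξ / (2 * α * k 0) := by
  have h0 : (0 : ℝ) ∈ Icc (0 : ℝ) 1 := by simp
  have hα0 : 0 < α := K.rhoC0_pos.trans hα
  have hsq := Real.sq_sqrt (K.one_sub_div_nonneg h0)
  have hs := Real.sqrt_nonneg (1 - k ξ / k 0)
  unfold rhoC0 rhoCMinus at hα
  set s := √(1 - k ξ / k 0)
  have hfactor : k ξ / k 0 = (1 - s) * (1 + s) := by linear_combination hsq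
  have hlt : k ξ / (2 * α * k 0) < 1 + s := by
    rw [mul_comm, ← div_div, hfactor, div_lt_iff₀ (by positivity), mul_comm]
    gcongr
    linarith
  linarith

section FluxPerturbation

variable {ι : Type*} {l : Filter ι} {lam : ι → ℝ} {m : ℝ} {S : Set ℝ}

lemma exists_eventually_add_le (K : IsBottleneck k ξ) (hlam : ∀ M > k ξ, ∀ᶠ i in l, lam i < M)
    (hS : IsCompact S) (hne : S.Nonempty) (hS01 : S ⊆ Icc 0 1)
    (hm : ∀ x ∈ S, m < 1 - k ξ / k x) :
    ∃ d > 0, ∀ᶠ i in l, ∀ x ∈ S, m + d ≤ 1 - lam i / k x := by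
  obtain ⟨z, hzS, hz⟩ := hS.exists_isMinOn hne (K.continuousOn_one_sub_div.mono hS01)
  obtain ⟨d, hd⟩ : ∃ d, m + 2 * d = 1 - k ξ / k z := ⟨(1 - k ξ / k z - m) / 2, by ring⟩
  have hd0 : 0 < d := by linarith [hm z hzS]
  have hkξ := K.min_pos
  refine ⟨d, hd0, (hlam (k ξ + d * k ξ) (by nlinarith)).mono fun i hi x hx => ?_⟩
  have hkx := K.pos x (hS01 hx)
  have hratio : lam i / k x ≤ k ξ / k x + d := by
    rw [div_add' _ _ _ hkx.ne']
    gcongr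
    exact hi.le.trans (by gcongr; exact K.le (hS01 hx))
  have hzx : 1 - k ξ / k z ≤ 1 - k ξ / k x := hz hx
  linarith

lemma exists_eventually_le_sub (K : IsBottleneck k ξ) (hlam : ∀ M < k ξ, ∀ᶠ i in l, M < lam i)
    (hS : IsCompact S) (hne : S.Nonempty) (hS01 : S ⊆ Icc 0 1)
    (hm : ∀ x ∈ S, 1 - k ξ / k x < m) :
    ∃ d > 0, ∀ᶠ i in l, ∀ x ∈ S, 1 - lam i / k x ≤ m - d := by
  obtain ⟨z, hzS, hz⟩ := hS.exists_isMaxOn hne (K.continuousOn_one_sub_div.mono hS01)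
  obtain ⟨d, hd⟩ : ∃ d, 1 - k ξ / k z = m - 2 * d := ⟨(m - (1 - k ξ / k z)) / 2, by ring⟩
  have hd0 : 0 < d := by linarith [hm z hzS]
  have hkξ := K.min_pos
  refine ⟨d, hd0, (hlam (k ξ - d * k ξ) (by nlinarith)).mono fun i hi x hx => ?_⟩
  have hkx := K.pos x (hS01 hx)
  have hratio : k ξ / k x - d ≤ lam i / k x := by
    rw [div_sub' hkx.ne', mul_comm (k x)]
    gcongr
    exact le_trans (by gcongr; exact K.le (hS01 hx)) hi.le
  have hzx : 1 - k ξ / k x ≤ 1 - k ξ / k z := hz hx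
  linarith

end FluxPerturbation

end IsBottleneck

/-- The boundary value problem in the variable `u = 2ρ - 1`, with viscosity `ε` (twice the original
one) and `lam = 4 k j` the constant value of the rescaled flux. -/
structure IsRiccatiSol (k : ℝ → ℝ) (ε α β lam : ℝ) (u : ℝ → ℝ) : Prop where
  hasDerivWithinAt : ∀ x ∈ Icc (0 : ℝ) 1,
    HasDerivWithinAt u ((1 - lam / k x - u x ^ 2) / ε) (Icc 0 1) x
  left : u 0 = 1 - lam / (2 * α * k 0)
  right : u 1 = lam / (2 * β * k 1) - 1

namespace IsRiccatiSol

variable {k u : ℝ → ℝ} {ε α β lam : ℝ}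

lemma reflect (h : IsRiccatiSol k ε α β lam u) :
    IsRiccatiSol (fun x => k (1 - x)) ε β α lam (fun x => -u (1 - x)) where
  hasDerivWithinAt x hx := by
    have hflip : HasDerivWithinAt (fun y : ℝ => 1 - y) (-1) (Icc 0 1) x := by
      simpa using ((hasDerivAt_id x).const_sub 1).hasDerivWithinAt
    refine ((h.hasDerivWithinAt (1 - x) (one_sub_mem_Icc hx)).comp x hflip
      fun _ => one_sub_mem_Icc).neg.congr_deriv ?_
    ring
  left := by simp [h.right]
  right := by simp [h.left]

lemma hasDerivWithinAt_Icc (h : IsRiccatiSol k ε α β lam u) {a b : ℝ} (ha : 0 ≤ a) (hb : b ≤ 1) :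
    ∀ x ∈ Icc a b, HasDerivWithinAt u ((1 - lam / k x - u x ^ 2) / ε) (Icc a b) x := fun x hx =>
  (h.hasDerivWithinAt x (Icc_subset_Icc ha hb hx)).mono (Icc_subset_Icc ha hb)

lemma lam_pos (h : IsRiccatiSol k ε α β lam u) (hk : ∀ x ∈ Icc (0 : ℝ) 1, 0 < k x) (hε : 0 < ε)
    (hα : 0 < α) (hβ : 0 < β) : 0 < lam := by
  by_contra! hlam
  have hk0 := hk 0 (by simp)
  have hk1 := hk 1 (by simp)
  have hleft : 0 ≤ u 0 := by
    have := div_nonpos_of_nonpos_of_nonneg hlam (by positivity : 0 ≤ 2 * α * k 0)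
    linarith [h.left]
  have hright : u 1 ≤ -1 := by
    have := div_nonpos_of_nonpos_of_nonneg hlam (by positivity : 0 ≤ 2 * β * k 1)
    linarith [h.right]
  have : 0 ≤ u 1 := by
    refine le_of_slope_lt_deriv one_pos le_rfl h.hasDerivWithinAt hleft fun x hx hux => ?_
    have hux0 : u x = 0 := le_antisymm hux.2 hux.1
    have := div_nonpos_of_nonpos_of_nonneg hlam (hk x hx).le
    rw [sub_self, zero_div, hux0]
    exact div_pos (by linarith) hε
  linarith

lemma le_one (h : IsRiccatiSol k ε α β lam u) (hk : ∀ x ∈ Icc (0 : ℝ) 1, 0 < k x) (hε : 0 < ε)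
    (hα : 0 < α) (hβ : 0 < β) {x : ℝ} (hx : x ∈ Icc (0 : ℝ) 1) : u x ≤ 1 := by
  have hlam := h.lam_pos hk hε hα hβ
  have hleft : u 0 ≤ 1 := by
    have := div_pos hlam (mul_pos (mul_pos two_pos hα) (hk 0 (by simp)))
    linarith [h.left]
  rcases hx.1.eq_or_lt with rfl | hx0
  · exact hleft
  rw [← neg_le_neg_iff]
  refine le_of_slope_lt_deriv (u := fun y => -u y) hx0 le_rfl
    (fun y hy => (h.hasDerivWithinAt_Icc le_rfl hx.2 y hy).neg) (neg_le_neg hleft)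
    fun y hy huy => ?_
  have huy1 : u y = 1 := neg_injective (le_antisymm huy.2 huy.1)
  have := div_pos hlam (hk y (Icc_subset_Icc_right hx.2 hy))
  rw [sub_self, zero_div, huy1, neg_pos]
  exact div_neg_of_neg_of_pos (by linarith) hε

lemma mem_Icc (h : IsRiccatiSol k ε α β lam u) (hk : ∀ x ∈ Icc (0 : ℝ) 1, 0 < k x) (hε : 0 < ε)
    (hα : 0 < α) (hβ : 0 < β) {x : ℝ} (hx : x ∈ Icc (0 : ℝ) 1) : u x ∈ Icc (-1) 1 := by
  have hreflect := h.reflect.le_one (fun y hy => hk _ (one_sub_mem_Icc hy)) hε hβ hα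
    (one_sub_mem_Icc hx)
  rw [sub_sub_cancel] at hreflect
  exact ⟨neg_le.1 hreflect, h.le_one hk hε hα hβ hx⟩

end IsRiccatiSol

/-- A family of solutions of the rescaled problem in the vanishing viscosity limit, indexed along an
arbitrary filter `l`; the boundary rates `α`, `β` are fixed while `ε → 0⁺`. -/
structure IsVanishingViscosity {ι : Type*} (k : ℝ → ℝ) (α β : ℝ) (l : Filter ι) (ε lam : ι → ℝ)
    (u : ι → ℝ → ℝ) : Prop where
  tendsto_eps : Tendsto ε l (𝓝[>] 0)
  eventually_sol : ∀ᶠ i in l, IsRiccatiSol k (ε i) α β (lam i) (u i)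

namespace IsVanishingViscosity

variable {ι : Type*} {k : ℝ → ℝ} {ξ α β : ℝ} {l : Filter ι} {ε lam : ι → ℝ} {u : ι → ℝ → ℝ}

lemma mono (h : IsVanishingViscosity k α β l ε lam u) {l' : Filter ι} (hl : l' ≤ l) :
    IsVanishingViscosity k α β l' ε lam u :=
  ⟨h.tendsto_eps.mono_left hl, h.eventually_sol.filter_mono hl⟩

lemma reflect (h : IsVanishingViscosity k α β l ε lam u) :
    IsVanishingViscosity (fun x => k (1 - x)) β α l ε lam (fun i x => -u i (1 - x)) :=
  ⟨h.tendsto_eps, h.eventually_sol.mono fun _ hi => hi.reflect⟩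

lemma eventually_hasDerivWithinAt (h : IsVanishingViscosity k α β l ε lam u) {a b : ℝ}
    (ha : 0 ≤ a) (hb : b ≤ 1) : ∀ᶠ i in l, ∀ x ∈ Icc a b,
      HasDerivWithinAt (u i) ((1 - lam i / k x - u i x ^ 2) / ε i) (Icc a b) x :=
  h.eventually_sol.mono fun _ hi => hi.hasDerivWithinAt_Icc ha hb

lemma eventually_mem_Icc (h : IsVanishingViscosity k α β l ε lam u)
    (hk : ∀ x ∈ Icc (0 : ℝ) 1, 0 < k x) (hα : 0 < α) (hβ : 0 < β) :
    ∀ᶠ i in l, ∀ x ∈ Icc (0 : ℝ) 1, u i x ∈ Icc (-1) 1 := by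
  filter_upwards [h.eventually_sol, h.tendsto_eps.eventually eventually_mem_nhdsWithin]
    with i hi hεi x hx
  exact hi.mem_Icc hk hεi hα hβ hx

lemma eventually_false_of_le_lam (h : IsVanishingViscosity k α β l ε lam u)
    (K : IsBottleneck k ξ) (hα : 0 < α) (hβ : 0 < β) {M : ℝ} (hM : k ξ < M)
    (hle : ∀ᶠ i in l, M ≤ lam i) : ∀ᶠ _ in l, False := by
  obtain ⟨N, hξN, hNM⟩ := exists_between hM
  have hN : 0 < N := K.min_pos.trans hξN
  have hnear : ∀ᶠ x in 𝓝 ξ, k x < N ∧ x < 1 :=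
    ((K.continuousOn.continuousAt (Icc_mem_nhds K.mem_Ioo.1 K.mem_Ioo.2)).eventually_lt_const
      hξN).and (eventually_lt_nhds K.mem_Ioo.2)
  obtain ⟨b, hξb, hb⟩ :=
    mem_nhdsGE_iff_exists_Icc_subset.1 (hnear.filter_mono nhdsWithin_le_nhds)
  have hb1 : b ≤ 1 := (hb (right_mem_Icc.2 hξb.le)).2.le
  have hbounds := h.eventually_mem_Icc K.pos hα hβ
  have hfall : ∀ᶠ i in l, u i b ≤ -2 := by
    refine eventually_ge_of_fast_decay (p := 1) (d := M / N - 1) h.tendsto_eps hξb (by norm_num)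
      (h.eventually_hasDerivWithinAt K.mem_Icc.1 hb1) (hbounds.mono fun i hi => (hi ξ K.mem_Icc).2)
      (sub_pos.2 ((one_lt_div hN).2 hNM)) (hle.mono fun i hlami x hx _ => ?_)
    have hratio : M / N ≤ lam i / k x :=
      div_le_div₀ (hN.le.trans (hNM.le.trans hlami)) hlami
        (K.pos x (Icc_subset_Icc K.mem_Icc.1 hb1 hx)) (hb hx).1.le
    linarith [sq_nonneg (u i x)]
  filter_upwards [hbounds, hfall] with i hi hfalli
  linarith [(hi b ⟨K.mem_Icc.1.trans hξb.le, hb1⟩).1]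

lemma eventually_lam_lt (h : IsVanishingViscosity k α β l ε lam u) (K : IsBottleneck k ξ)
    (hα : 0 < α) (hβ : 0 < β) {M : ℝ} (hM : k ξ < M) : ∀ᶠ i in l, lam i < M := by
  have hfalse := (h.mono inf_le_left).eventually_false_of_le_lam K hα hβ hM
    (mem_inf_of_right (mem_principal_self {i | M ≤ lam i}))
  exact (eventually_inf_principal.1 hfalse).mono fun _ hi => not_le.1 hi

lemma eventually_le_of_sq_lt (h : IsVanishingViscosity k α β l ε lam u) (K : IsBottleneck k ξ)
    (hlam : ∀ M > k ξ, ∀ᶠ i in l, lam i < M) {a b q : ℝ} (ha : 0 ≤ a) (hab : a < b) (hb : b ≤ 1)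
    (hq : 0 ≤ q) (hlt : ∀ x ∈ Icc a b, q ^ 2 < 1 - k ξ / k x) (hua : ∀ᶠ i in l, -q ≤ u i a) :
    ∀ᶠ i in l, q ≤ u i b := by
  obtain ⟨d, hd, hgrow⟩ := K.exists_eventually_add_le hlam isCompact_Icc
    (nonempty_Icc.2 hab.le) (Icc_subset_Icc ha hb) hlt
  refine eventually_le_of_fast_growth h.tendsto_eps hab (neg_le_self hq)
    (h.eventually_hasDerivWithinAt ha hb) hua hd (hgrow.mono fun i hi x hx hux => ?_)
  linarith [hi x hx, sq_le_sq' hux.1 hux.2]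

lemma eventually_nonneg_near_zero (h : IsVanishingViscosity k α β l ε lam u)
    (K : IsBottleneck k ξ) (hlam : ∀ M > k ξ, ∀ᶠ i in l, lam i < M) (hα : rhoC0 k ξ < α) :
    ∀ᶠ b in 𝓝[>] (0 : ℝ), ∀ᶠ i in l, 0 ≤ u i b := by
  have h0 : (0 : ℝ) ∈ Icc (0 : ℝ) 1 := by simp
  have hα0 : 0 < α := K.rhoC0_pos.trans hα
  have hk0 : 0 < k 0 := K.pos 0 h0
  have hs : 0 < √(1 - k ξ / k 0) := Real.sqrt_pos.2 (K.one_sub_div_pos h0 K.mem_Ioo.1.ne)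
  obtain ⟨r, hr, hrs⟩ :=
    exists_between (max_lt hs (neg_lt.1 (K.neg_sqrt_lt_boundary_value hα)))
  obtain ⟨hr0, hrα⟩ := max_lt_iff.1 hr
  have hstart : ∀ᶠ i in l, -r ≤ u i 0 := by
    have hM : k ξ < (1 + r) * (2 * α * k 0) := (div_lt_iff₀ (by positivity)).1 (by linarith)
    filter_upwards [h.eventually_sol, hlam _ hM] with i hi hlami
    have := (div_lt_iff₀ (by positivity : 0 < 2 * α * k 0)).2 hlami
    linarith [hi.left]
  have hgap : ∀ᶠ x in 𝓝[≥] (0 : ℝ), r ^ 2 < 1 - k ξ / k x := by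
    rw [← nhdsWithin_Icc_eq_nhdsGE one_pos]
    exact (K.continuousOn_one_sub_div 0 h0).eventually_const_lt ((Real.lt_sqrt hr0.le).1 hrs)
  obtain ⟨c, hc, hcgap⟩ := mem_nhdsGE_iff_exists_Icc_subset.1 hgap
  filter_upwards [Ioo_mem_nhdsGT (lt_min hc one_pos)] with b hb
  have hbc : b ≤ c := (hb.2.trans_le (min_le_left _ _)).le
  have hb1 : b ≤ 1 := (hb.2.trans_le (min_le_right _ _)).le
  exact (h.eventually_le_of_sq_lt K hlam le_rfl hb.1 hb1 hr0.le
    (fun x hx => hcgap (Icc_subset_Icc_right hbc hx)) hstart).mono fun i hi => hr0.le.trans hi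

lemma eventually_nonneg (h : IsVanishingViscosity k α β l ε lam u) (K : IsBottleneck k ξ)
    (hlam : ∀ M > k ξ, ∀ᶠ i in l, lam i < M) (hα : rhoC0 k ξ < α) {x : ℝ} (hx : x ∈ Ioo 0 ξ) :
    ∀ᶠ i in l, 0 ≤ u i x := by
  obtain ⟨b, hub, hb0, hbx⟩ :=
    ((h.eventually_nonneg_near_zero K hlam hα).and (Ioo_mem_nhdsGT hx.1)).exists
  have hx1 : x ≤ 1 := hx.2.le.trans K.mem_Icc.2
  refine h.eventually_le_of_sq_lt K hlam hb0.le hbx hx1 le_rfl (fun y hy => ?_) (by simpa using hub)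
  rw [zero_pow two_ne_zero]
  exact K.one_sub_div_pos (Icc_subset_Icc hb0.le hx1 hy) (hy.2.trans_lt hx.2).ne

lemma eventually_false_of_lam_le (h : IsVanishingViscosity k α β l ε lam u)
    (K : IsBottleneck k ξ) (hα : rhoC0 k ξ < α) (hβ : 1 - rhoC1 k ξ < β) {M : ℝ} (hM0 : 0 < M)
    (hM : M < k ξ) (hle : ∀ᶠ i in l, lam i ≤ M) : ∀ᶠ _ in l, False := by
  obtain ⟨hξ0, hξ1⟩ := K.mem_Ioo
  have hlam : ∀ N > k ξ, ∀ᶠ i in l, lam i < N := fun N hN =>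
    hle.mono fun _ hi => hi.trans_lt (hM.trans hN)
  have hleft : ∀ᶠ i in l, 0 ≤ u i (ξ / 2) :=
    h.eventually_nonneg K hlam hα ⟨half_pos hξ0, half_lt_self hξ0⟩
  have hright : ∀ᶠ i in l, 0 ≤ -u i (1 - (1 - ξ) / 2) :=
    h.reflect.eventually_nonneg K.reflect (by simpa only [sub_sub_cancel] using hlam)
      (by rwa [rhoC0_reflect]) ⟨half_pos (sub_pos.2 hξ1), half_lt_self (sub_pos.2 hξ1)⟩
  obtain ⟨q, hq0, hq⟩ :=
    exists_between (Real.sqrt_pos.2 (sub_pos.2 ((div_lt_one K.min_pos).2 hM)))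
  have hclimb : ∀ᶠ i in l, q ≤ u i (1 - (1 - ξ) / 2) := by
    refine eventually_le_of_fast_growth h.tendsto_eps (a := ξ / 2) (by linarith) hq0.le
      (h.eventually_hasDerivWithinAt (by linarith) (by linarith)) hleft
      (sub_pos.2 ((Real.lt_sqrt hq0.le).1 hq)) (hle.mono fun i hlami x hx hux => ?_)
    have hratio : lam i / k x ≤ M / k ξ :=
      div_le_div₀ hM0.le hlami K.min_pos (K.le ⟨by linarith [hx.1], by linarith [hx.2]⟩)
    linarith [pow_le_pow_left₀ hux.1 hux.2 2]
  filter_upwards [hright, hclimb] with i hri hci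
  linarith

lemma tendsto_lam (h : IsVanishingViscosity k α β l ε lam u) (K : IsBottleneck k ξ)
    (hα : rhoC0 k ξ < α) (hβ : 1 - rhoC1 k ξ < β) : Tendsto lam l (𝓝 (k ξ)) := by
  refine tendsto_order.2 ⟨fun M hM => ?_, fun M => h.eventually_lam_lt K (K.rhoC0_pos.trans hα)
    (K.one_sub_rhoC1_pos.trans hβ)⟩
  obtain ⟨N, hN, hNξ⟩ := exists_between (max_lt hM K.min_pos)
  obtain ⟨hMN, hN0⟩ := max_lt_iff.1 hN
  have hfalse := (h.mono inf_le_left).eventually_false_of_lam_le K hα hβ hN0 hNξ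
    (mem_inf_of_right (mem_principal_self {i | lam i ≤ N}))
  exact (eventually_inf_principal.1 hfalse).mono fun _ hi => hMN.trans (not_le.1 hi)

lemma eventually_le_of_sqrt_lt (h : IsVanishingViscosity k α β l ε lam u) (K : IsBottleneck k ξ)
    (hα : rhoC0 k ξ < α) (hβ : 1 - rhoC1 k ξ < β) {x q : ℝ} (hx : x ∈ Ioo (0 : ℝ) 1)
    (hq : √(1 - k ξ / k x) < q) : ∀ᶠ i in l, u i x ≤ q := by
  have hq0 : 0 < q := (Real.sqrt_nonneg _).trans_lt hq
  obtain ⟨a, ha, hgap⟩ := exists_Icc_forall_of_eventually hx.1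
    ((K.continuousAt_one_sub_div hx).eventually_lt_const ((Real.sqrt_lt' hq0).1 hq))
  obtain ⟨d, hd, hdecay⟩ := K.exists_eventually_le_sub
    (tendsto_order.1 (h.tendsto_lam K hα hβ)).1 isCompact_Icc (nonempty_Icc.2 ha.2.le)
    (Icc_subset_Icc ha.1.le hx.2.le) hgap
  have hbounds := h.eventually_mem_Icc K.pos (K.rhoC0_pos.trans hα) (K.one_sub_rhoC1_pos.trans hβ)
  refine eventually_ge_of_fast_decay h.tendsto_eps ha.2 (le_max_right 1 q)
    (h.eventually_hasDerivWithinAt ha.1.le hx.2.le)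
    (hbounds.mono fun i hi => (hi a ⟨ha.1.le, (ha.2.trans hx.2).le⟩).2.trans (le_max_left 1 q)) hd
    (hdecay.mono fun i hi y hy huy => ?_)
  linarith [hi y hy, pow_le_pow_left₀ hq0.le huy.1 2]

lemma eventually_ge_of_lt_sqrt (h : IsVanishingViscosity k α β l ε lam u) (K : IsBottleneck k ξ)
    (hlam : ∀ M > k ξ, ∀ᶠ i in l, lam i < M) (hα : rhoC0 k ξ < α) {x q : ℝ} (hx : x ∈ Ioo 0 ξ)
    (hq0 : 0 ≤ q) (hq : q < √(1 - k ξ / k x)) : ∀ᶠ i in l, q ≤ u i x := by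
  have hx1 : x < 1 := hx.2.trans K.mem_Ioo.2
  obtain ⟨a, ha, hgap⟩ := exists_Icc_forall_of_eventually hx.1
    ((K.continuousAt_one_sub_div ⟨hx.1, hx1⟩).eventually_const_lt ((Real.lt_sqrt hq0).1 hq))
  exact h.eventually_le_of_sq_lt K hlam ha.1.le ha.2 hx1.le hq0 hgap
    ((h.eventually_nonneg K hlam hα ⟨ha.1, ha.2.trans hx.2⟩).mono fun i hi =>
      (neg_nonpos.2 hq0).trans hi)

lemma eventually_gt_of_lt_sqrt (h : IsVanishingViscosity k α β l ε lam u) (K : IsBottleneck k ξ)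
    (hα : rhoC0 k ξ < α) (hβ : 1 - rhoC1 k ξ < β) {x q : ℝ} (hx : x ∈ Ioc 0 ξ)
    (hq : q < √(1 - k ξ / k x)) : ∀ᶠ i in l, q < u i x := by
  rcases hx.2.eq_or_lt with rfl | hxξ
  · rw [div_self K.min_pos.ne', sub_self, Real.sqrt_zero] at hq
    obtain ⟨r, hqr, hr⟩ := exists_between hq
    have hupper := h.reflect.eventually_le_of_sqrt_lt K.reflect (by rwa [rhoC0_reflect])
      (by rwa [rhoC1_reflect, sub_sub_cancel]) K.reflect.mem_Ioo (q := -r)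
      (by simpa [div_self K.min_pos.ne'] using hr)
    exact hupper.mono fun i hi => hqr.trans_le (by simpa using hi)
  · have hpos : 0 < √(1 - k ξ / k x) := Real.sqrt_pos.2
      (K.one_sub_div_pos ⟨hx.1.le, hx.2.trans K.mem_Icc.2⟩ hxξ.ne)
    obtain ⟨r, hr, hrs⟩ := exists_between (max_lt hq hpos)
    obtain ⟨hqr, hr0⟩ := max_lt_iff.1 hr
    exact (h.eventually_ge_of_lt_sqrt K (tendsto_order.1 (h.tendsto_lam K hα hβ)).2 hα
      ⟨hx.1, hxξ⟩ hr0.le hrs).mono fun i hi => hqr.trans_le hi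

lemma tendsto_sqrt (h : IsVanishingViscosity k α β l ε lam u) (K : IsBottleneck k ξ)
    (hα : rhoC0 k ξ < α) (hβ : 1 - rhoC1 k ξ < β) {x : ℝ} (hx : x ∈ Ioc 0 ξ) :
    Tendsto (fun i => u i x) l (𝓝 √(1 - k ξ / k x)) := by
  refine tendsto_order.2 ⟨fun q => h.eventually_gt_of_lt_sqrt K hα hβ hx, fun q hq => ?_⟩
  obtain ⟨r, hr, hrq⟩ := exists_between hq
  exact (h.eventually_le_of_sqrt_lt K hα hβ ⟨hx.1, hx.2.trans_lt K.mem_Ioo.2⟩ hr).mono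
    fun i hi => hi.trans_lt hrq

lemma tendsto_neg_sqrt (h : IsVanishingViscosity k α β l ε lam u) (K : IsBottleneck k ξ)
    (hα : rhoC0 k ξ < α) (hβ : 1 - rhoC1 k ξ < β) {x : ℝ} (hx : x ∈ Ico ξ 1) :
    Tendsto (fun i => u i x) l (𝓝 (-√(1 - k ξ / k x))) := by
  have hreflect := h.reflect.tendsto_sqrt K.reflect (by rwa [rhoC0_reflect])
    (by rwa [rhoC1_reflect, sub_sub_cancel]) (x := 1 - x) ⟨sub_pos.2 hx.2, by linarith [hx.1]⟩
  simpa using hreflect.neg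

end IsVanishingViscosity

/-- The limit `ε → 0⁺` along pairs `(ε, ρ)` of a viscosity and a solution of the boundary value
problem. A property holding eventually in this filter holds, for all small enough `ε > 0`, for every
solution `ρ`; when there are no solutions the filter is trivial. -/
def statSolFilter (k : ℝ → ℝ) (α β : ℝ) : Filter (ℝ × (ℝ → ℝ)) :=
  comap Prod.fst (𝓝[>] 0) ⊓ 𝓟 {p | IsStatSol k p.1 α β p.2}

section StationarySolutions

variable {k : ℝ → ℝ} {ξ α β : ℝ}

lemma hasBasis_statSolFilter (k : ℝ → ℝ) (α β : ℝ) :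
    (statSolFilter k α β).HasBasis (fun ε₀ => 0 < ε₀)
      fun ε₀ => Prod.fst ⁻¹' Ioo 0 ε₀ ∩ {p | IsStatSol k p.1 α β p.2} :=
  ((nhdsGT_basis 0).comap Prod.fst).inf_principal _

lemma IsStatSol.mul_flux_eq {ε : ℝ} {ρ : ℝ → ℝ} (h : IsStatSol k ε α β ρ)
    (hk : DifferentiableOn ℝ k (Icc 0 1)) {x : ℝ} (hx : x ∈ Icc (0 : ℝ) 1) :
    k x * flux ε ρ x = k 0 * flux ε ρ 0 := by
  obtain ⟨hρ, hflux, -⟩ := h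
  have hρd : DifferentiableOn ℝ ρ (Icc 0 1) := hρ.differentiableOn two_ne_zero
  have hρ'd : DifferentiableOn ℝ (derivWithin ρ (Icc 0 1)) (Icc 0 1) :=
    (hρ.derivWithin (m := 1) (uniqueDiffOn_Icc one_pos) (by norm_num)).differentiableOn one_ne_zero
  have hd : DifferentiableOn ℝ (fun y => k y * flux ε ρ y) (Icc 0 1) :=
    hk.mul ((hρ'd.const_mul _).add (hρd.mul (hρd.const_sub 1)))
  exact constant_of_derivWithin_zero hd (fun y hy => hflux y ⟨hy.1, hy.2.le⟩) x hx

lemma IsStatSol.isRiccatiSol {ε : ℝ} {ρ : ℝ → ℝ} (h : IsStatSol k ε α β ρ)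
    (hk : DifferentiableOn ℝ k (Icc 0 1)) (hkpos : ∀ x ∈ Icc (0 : ℝ) 1, 0 < k x) (hε : 0 < ε)
    (hα : 0 < α) (hβ : 0 < β) :
    IsRiccatiSol k (2 * ε) α β (4 * (k 0 * flux ε ρ 0)) (fun x => 2 * ρ x - 1) where
  hasDerivWithinAt x hx := by
    have hρ := (h.1.differentiableOn two_ne_zero x hx).hasDerivWithinAt
    refine ((hρ.const_mul 2).sub_const 1).congr_deriv ?_
    have := (hkpos x hx).ne'
    rw [← h.mul_flux_eq hk hx]
    unfold flux
    field_simp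
    ring
  left := by
    have := (hkpos 0 (by simp)).ne'
    rw [h.2.2.1]
    field_simp
    ring
  right := by
    have := (hkpos 1 (by simp)).ne'
    rw [← h.mul_flux_eq hk (right_mem_Icc.2 zero_le_one), h.2.2.2]
    field_simp
    ring

lemma isVanishingViscosity_statSolFilter (hk : DifferentiableOn ℝ k (Icc 0 1))
    (hkpos : ∀ x ∈ Icc (0 : ℝ) 1, 0 < k x) (hα : 0 < α) (hβ : 0 < β) :
    IsVanishingViscosity k α β (statSolFilter k α β) (fun p => 2 * p.1)
      (fun p => 4 * (k 0 * flux p.1 p.2 0)) (fun p x => 2 * p.2 x - 1) where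
  tendsto_eps := by
    have hdouble : Tendsto (fun ε : ℝ => 2 * ε) (𝓝[>] 0) (𝓝[>] 0) :=
      tendsto_nhdsWithin_iff.2
        ⟨(Continuous.tendsto' (by fun_prop) 0 0 (mul_zero 2)).mono_left nhdsWithin_le_nhds,
          eventually_mem_nhdsWithin.mono fun _ hε => mul_pos two_pos (mem_Ioi.1 hε)⟩
    exact hdouble.comp (tendsto_comap.mono_left inf_le_left)
  eventually_sol := (hasBasis_statSolFilter k α β).eventually_iff.2
    ⟨1, one_pos, fun _ hp => hp.2.isRiccatiSol hk hkpos hp.1.1 hα hβ⟩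

lemma tendsto_statSol (K : IsBottleneck k ξ) (hk : DifferentiableOn ℝ k (Icc 0 1))
    (hα : rhoC0 k ξ < α) (hβ : 1 - rhoC1 k ξ < β) {x : ℝ} (hx : x ∈ Ioo (0 : ℝ) 1) :
    Tendsto (fun p => p.2 x) (statSolFilter k α β) (𝓝 (rhoSc k ξ x)) := by
  have h := isVanishingViscosity_statSolFilter hk K.pos (K.rhoC0_pos.trans hα)
    (K.one_sub_rhoC1_pos.trans hβ)
  unfold rhoSc rhoCPlus rhoCMinus
  split_ifs with hxξ
  · refine (((h.tendsto_sqrt K hα hβ ⟨hx.1, hxξ⟩).const_add 1).const_mul (1 / 2)).congr fun p => ?_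
    ring
  · rw [sub_eq_add_neg 1 √_]
    refine (((h.tendsto_neg_sqrt K hα hβ ⟨(not_le.1 hxξ).le, hx.2⟩).const_add 1).const_mul
      (1 / 2)).congr fun p => ?_
    ring

end StationarySolutions

theorem bvp_interior_converges_to_canard_general
    (k : ℝ → ℝ) (ξs : ℝ)
    (hk : DifferentiableOn ℝ k (Icc 0 1))
    (hkpos : ∀ x ∈ Icc (0 : ℝ) 1, 0 < k x)
    (hξs : ξs ∈ Ioo (0 : ℝ) 1)
    (hmin : ∀ x ∈ Icc (0 : ℝ) 1, x ≠ ξs → k ξs < k x)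
    (α β : ℝ) (hα : rhoC0 k ξs < α) (hβ : 1 - rhoC1 k ξs < β)
    (x : ℝ) (hx : x ∈ Ioo (0 : ℝ) 1) :
    ∀ δ > 0, ∃ ε₀ > 0, ∀ ε : ℝ, 0 < ε → ε < ε₀ →
      ∀ ρ : ℝ → ℝ, IsStatSol k ε α β ρ →
        |ρ x - rhoSc k ξs x| < δ := by
  intro δ hδ
  have K : IsBottleneck k ξs := ⟨hk.continuousOn, hkpos, hξs, hmin⟩
  obtain ⟨ε₀, hε₀, hclose⟩ := (hasBasis_statSolFilter k α β).eventually_iff.1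
    (Metric.tendsto_nhds.1 (tendsto_statSol K hk hα hβ hx) δ hδ)
  exact ⟨ε₀, hε₀, fun ε hε hεε₀ ρ hρ => hclose (x := (ε, ρ)) ⟨⟨hε, hεε₀⟩, hρ⟩⟩

/-- In the transitional/canard parameter regions
(`ρ_c^0 < α < 1`, `α ≠ 1 - ρ_c^0`; `1 - ρ_c^1 < β < 1`, `β ≠ ρ_c^1`), at every interior
point `x ∈ (0,1)` the solutions of the stationary boundary value problem converge, as
`ε → 0`, to the canard profile `ρ_Sc(x)`. -/
theorem bvp_interior_converges_to_canard
    (k : ℝ → ℝ) (ξs : ℝ)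
    (hk : ContDiff ℝ 2 k)
    (hkpos : ∀ x ∈ Icc (0:ℝ) 1, 0 < k x)
    (hξs : ξs ∈ Ioo (0:ℝ) 1)
    (hmin : ∀ x ∈ Icc (0:ℝ) 1, x ≠ ξs → k ξs < k x)
    (hk's : deriv k ξs = 0)
    (hk''s : 0 < deriv (deriv k) ξs)
    (α β : ℝ)
    (hα1 : rhoC0 k ξs < α) (hα2 : α < 1) (hα3 : α ≠ 1 - rhoC0 k ξs)
    (hβ1 : 1 - rhoC1 k ξs < β) (hβ2 : β < 1) (hβ3 : β ≠ rhoC1 k ξs)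
    (x : ℝ) (hx : x ∈ Ioo (0:ℝ) 1) :
    ∀ δ > 0, ∃ ε₀ > 0, ∀ ε : ℝ, 0 < ε → ε < ε₀ →
      ∀ ρ : ℝ → ℝ, IsStatSol k ε α β ρ →
        |ρ x - rhoSc k ξs x| < δ :=
  bvp_interior_converges_to_canard_general k ξs (hk.differentiable two_ne_zero).differentiableOn
    hkpos hξs hmin α β hα1 hβ1 x hx
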